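/- arXiv:1604.01984 — 2 statements merged into one kernel-verified Lean document; each statement's English description precedes it below -/
import Mathlib

section
/- Let (X_1,…,X_r) have the GEV_r density f_r with parameters μ ∈ ℝ, σ > 0, ξ ≠ 0. Then for every j with 1 ≤ j ≤ r, E[log(1+ξ Z_j)] = −ξ ψ(j). -/
open MeasureTheory ProbabilityTheory Real Filter Topology

/-- The joint density of the `r` largest order statistics limit (GEV_r) with
location `μ`, scale `σ`, and shape `ξ ≠ 0`.  The coordinates are in decreasing
order: `x 0` is `x_1` (the largest) and `x ⟨r-1,_⟩` is `x_r`. -/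
noncomputable def gevrDensity (μ σ ξ : ℝ) (r : ℕ) (x : Fin r → ℝ) : ℝ :=
  if h : 0 < r ∧ StrictAnti x ∧ (∀ j, 0 < 1 + ξ * ((x j - μ) / σ)) then
    (σ ^ r)⁻¹ * Real.exp
      (-(1 + ξ * ((x ⟨r - 1, Nat.sub_lt h.1 Nat.one_pos⟩ - μ) / σ)) ^ (-1 / ξ)
        - (1 / ξ + 1) * ∑ j, Real.log (1 + ξ * ((x j - μ) / σ)))
  else 0

/-- The GEV_r probability measure on `ℝ^r`, given by the density `gevrDensity`. -/
noncomputable def gevrMeasure (μ σ ξ : ℝ) (r : ℕ) : Measure (Fin r → ℝ) :=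
  MeasureTheory.volume.withDensity fun x => ENNReal.ofReal (gevrDensity μ σ ξ r x)


/-- The digamma function `ψ(x) = Γ'(x)/Γ(x)`. -/
noncomputable def digamma (x : ℝ) : ℝ := deriv Real.Gamma x / Real.Gamma x

/-! On its support let `T x = (1 + ξ (x - μ) / σ) ^ (-1 / ξ)`. Since `T` is strictly decreasing
onto `(0, ∞)`, applying it coordinatewise turns the GEV density of order `r` into `exp (-y_r)` on
the cone `0 < y_1 < ⋯ < y_r`, which is the joint law of the first `r` arrival times of a unit rate
Poisson process. The `j`-th arrival time is Gamma distributed with shape `j`, and the expected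
logarithm of such a variable is `Γ'(j) / Γ(j) = ψ(j)`, because differentiating Euler's integral
brings down a factor `log t`. Finally `log (1 + ξ Z_j) = -ξ log (T X_j)`. -/

open scoped ENNReal

theorem measurePreserving_withDensity_comp {α β : Type*} [MeasurableSpace α] [MeasurableSpace β]
    {μ : Measure α} {ν : Measure β} {f : α → β} {g : β → ℝ≥0∞}
    (hf : MeasurePreserving f μ ν) (hg : Measurable g) :
    MeasurePreserving f (μ.withDensity fun x ↦ g (f x)) (ν.withDensity g) := by
  refine ⟨hf.measurable, Measure.ext fun s hs ↦ ?_⟩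
  rw [Measure.map_apply hf.measurable hs, withDensity_apply _ (hf.measurable hs),
    withDensity_apply _ hs, ← hf.map_eq, setLIntegral_map hs hg hf.measurable]

section Snoc

variable {n : ℕ} {β : Type*} [MeasurableSpace β]

theorem measurePreserving_snoc (μ : Fin (n + 1) → Measure β) [∀ i, SigmaFinite (μ i)] :
    MeasurePreserving (fun p : (Fin n → β) × β ↦ (Fin.snoc p.1 p.2 : Fin (n + 1) → β))
      ((Measure.pi fun i ↦ μ (Fin.castSucc i)).prod (μ (Fin.last n))) (Measure.pi μ) := by
  have hinsert := (measurePreserving_piFinSuccAbove μ (Fin.last n)).symm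
  simp only [Fin.succAbove_last] at hinsert
  convert! hinsert.comp Measure.measurePreserving_swap using 1
  ext p i
  simp [MeasurableEquiv.piFinSuccAbove, Fin.insertNthEquiv]

theorem pi_withDensity (μ : Fin n → Measure β) [∀ i, SigmaFinite (μ i)] (f : Fin n → β → ℝ≥0∞)
    [∀ i, SigmaFinite ((μ i).withDensity (f i))] (hf : ∀ i, Measurable (f i)) :
    (Measure.pi fun i ↦ (μ i).withDensity (f i)) =
      (Measure.pi μ).withDensity fun x ↦ ∏ i, f i (x i) := by
  induction n with
  | zero =>
    rw [Subsingleton.elim (fun i ↦ (μ i).withDensity (f i)) μ]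
    simp
  | succ n ih =>
    have hprod : Measurable fun x : Fin (n + 1) → β ↦ ∏ i, f i (x i) := by fun_prop
    rw [← (measurePreserving_snoc _).map_eq,
      ← (measurePreserving_withDensity_comp (measurePreserving_snoc μ) hprod).map_eq,
      ih _ _ fun i ↦ hf i.castSucc, prod_withDensity (by fun_prop) (hf _)]
    simp only [Fin.prod_univ_castSucc, Fin.snoc_castSucc, Fin.snoc_last]

end Snoc

section Monotone

variable {ι β : Type*} [Countable ι] [Preorder ι] [LinearOrder β] [TopologicalSpace β]
  [OrderClosedTopology β] [SecondCountableTopology β] [MeasurableSpace β] [OpensMeasurableSpace β]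

theorem measurableSet_strictMono : MeasurableSet {f : ι → β | StrictMono f} := by
  simp only [StrictMono, Set.ofPred_forall]
  exact .iInter fun i ↦ .iInter fun j ↦ .iInter fun _ ↦
    measurableSet_lt (measurable_pi_apply i) (measurable_pi_apply j)

theorem measurableSet_strictAnti : MeasurableSet {f : ι → β | StrictAnti f} := by
  simp only [StrictAnti, Set.ofPred_forall]
  exact .iInter fun i ↦ .iInter fun j ↦ .iInter fun _ ↦
    measurableSet_lt (measurable_pi_apply j) (measurable_pi_apply i)

end Monotone

theorem measurePreserving_withDensity_abs_deriv {f f' : ℝ → ℝ} {s : Set ℝ}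
    (hs : MeasurableSet s) (hf : Measurable f) (hf' : ∀ x ∈ s, HasDerivWithinAt f (f' x) s x)
    (hinj : Set.InjOn f s) :
    MeasurePreserving f ((volume.restrict s).withDensity fun x ↦ ENNReal.ofReal |f' x|)
      (volume.restrict (f '' s)) := by
  refine ⟨hf, ?_⟩
  simpa using map_withDensity_abs_det_fderiv_eq_addHaar volume hs.nullMeasurableSet
    (fun x hx ↦ (hf' x hx).hasFDerivWithinAt) hinj

theorem strictMono_snoc_iff {n : ℕ} {α : Type*} [Preorder α] {y : Fin (n + 1) → α} {t : α} :
    StrictMono (Fin.snoc y t : Fin (n + 2) → α) ↔ StrictMono y ∧ y (Fin.last n) < t := by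
  simp only [Fin.strictMono_iff_lt_succ, Fin.forall_fin_succ', Fin.succ_last, Fin.snoc_castSucc,
    Fin.snoc_last, Fin.succ_castSucc]

section Gamma

theorem hasDerivAt_Gamma_of_pos {a : ℝ} (ha : 0 < a) :
    HasDerivAt Real.Gamma (∫ t in Set.Ioi 0, t ^ (a - 1) * (log t * exp (-t))) a := by
  have hintegral : (∫ t : ℝ in Set.Ioi 0, (t : ℂ) ^ ((a : ℂ) - 1) * (log t * exp (-t)) : ℂ) =
      (∫ t in Set.Ioi 0, t ^ (a - 1) * (log t * exp (-t)) : ℝ) := by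
    rw [← integral_complex_ofReal]
    refine setIntegral_congr_fun measurableSet_Ioi fun t ht ↦ ?_
    simp [Complex.ofReal_cpow (le_of_lt ht)]
  have hderiv := Complex.hasDerivAt_GammaIntegral (s := a) ha
  rw [hintegral] at hderiv
  refine HasDerivAt.real_of_complex (hderiv.congr_of_eventuallyEq ?_)
  filter_upwards [(isOpen_lt continuous_const Complex.continuous_re).mem_nhds ha] with s hs
  exact Complex.Gamma_eq_integral hs

theorem gammaMeasure_eq_withDensity_restrict_Ioi (a r : ℝ) :
    gammaMeasure a r = (volume.restrict (Set.Ioi 0)).withDensity fun t ↦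
      ENNReal.ofReal (r ^ a / Gamma a * t ^ (a - 1) * exp (-(r * t))) := by
  rw [restrict_Ioi_eq_restrict_Ici, ← withDensity_indicator measurableSet_Ici, gammaMeasure]
  refine congrArg _ (funext fun t ↦ ?_)
  by_cases ht : 0 ≤ t
  · rw [Set.indicator_of_mem (Set.mem_Ici.2 ht), gammaPDF_of_nonneg ht]
  · rw [Set.indicator_of_notMem (mt Set.mem_Ici.1 ht), gammaPDF_of_neg (not_le.1 ht)]

theorem integral_log_gammaMeasure_one {a : ℝ} (ha : 0 < a) :
    ∫ t, log t ∂gammaMeasure a 1 = digamma a := by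
  calc ∫ t, log t ∂gammaMeasure a 1
    _ = ∫ t in Set.Ioi 0, (Gamma a)⁻¹ * (t ^ (a - 1) * (log t * exp (-t))) := by
      rw [gammaMeasure_eq_withDensity_restrict_Ioi,
        integral_withDensity_eq_integral_toReal_smul (by fun_prop) (by simp)]
      refine setIntegral_congr_fun measurableSet_Ioi fun t (ht : 0 < t) ↦ ?_
      simp only [one_rpow, one_mul, one_div, smul_eq_mul]
      rw [ENNReal.toReal_ofReal (by positivity)]
      ring
    _ = digamma a := by
      rw [integral_const_mul, ← (hasDerivAt_Gamma_of_pos ha).deriv, digamma, inv_mul_eq_div]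

end Gamma

section PoissonArrivals

/-- Lebesgue measure on the cone `0 < y 0 < ⋯ < y n`. -/
noncomputable def increasingVolume (n : ℕ) : Measure (Fin (n + 1) → ℝ) :=
  (Measure.pi fun _ ↦ volume.restrict (Set.Ioi 0)).restrict {y | StrictMono y}

/-- The joint law of the first `n + 1` arrival times `y 0 < ⋯ < y n` of a unit rate Poisson
process on `(0, ∞)`, given by its density `exp (-y n)` on the cone of increasing vectors. -/
noncomputable def poissonArrivalMeasure (n : ℕ) : Measure (Fin (n + 1) → ℝ) :=
  (increasingVolume n).withDensity fun y ↦ ENNReal.ofReal (exp (-y (Fin.last n)))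

theorem lintegral_Iio_pow_div_factorial (n : ℕ) {t : ℝ} (ht : 0 < t) :
    ∫⁻ s in Set.Iio t, ENNReal.ofReal (s ^ n / n.factorial) ∂volume.restrict (Set.Ioi 0) =
      ENNReal.ofReal (t ^ (n + 1) / (n + 1).factorial) := by
  rw [Measure.restrict_restrict measurableSet_Iio, Set.inter_comm, Set.Ioi_inter_Iio,
    restrict_Ioo_eq_restrict_Ioc, ← ofReal_integral_eq_lintegral_ofReal,
    ← intervalIntegral.integral_of_le ht.le, intervalIntegral.integral_div, integral_pow,
    Nat.factorial_succ]
  · push_cast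
    congr 1
    field_simp
    simp
  · exact (Continuous.integrableOn_Icc (by fun_prop)).mono_set Set.Ioc_subset_Icc_self
  · filter_upwards [ae_restrict_mem measurableSet_Ioc] with s hs
    have hs_pos : 0 < s := hs.1
    simp only [Pi.zero_apply]
    positivity

theorem lintegral_Ioi_exp_neg {s : ℝ} (hs : 0 ≤ s) :
    ∫⁻ t in Set.Ioi s, ENNReal.ofReal (exp (-t)) ∂volume.restrict (Set.Ioi 0) =
      ENNReal.ofReal (exp (-s)) := by
  rw [Measure.restrict_restrict measurableSet_Ioi, Set.Ioi_inter_Ioi, sup_eq_left.2 hs,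
    ← ofReal_integral_eq_lintegral_ofReal (integrableOn_exp_neg_Ioi s)
      (ae_of_all _ fun t ↦ (exp_pos _).le), integral_exp_neg_Ioi]

theorem measurePreserving_last_increasingVolume (n : ℕ) :
    MeasurePreserving (fun y ↦ y (Fin.last n)) (increasingVolume n)
      ((volume.restrict (Set.Ioi 0)).withDensity fun t ↦
        ENNReal.ofReal (t ^ n / n.factorial)) := by
  have hlast (n : ℕ) : Measurable fun y : Fin (n + 1) → ℝ ↦ y (Fin.last n) := by fun_prop
  induction n with
  | zero =>
    have huniv : {y : Fin 1 → ℝ | StrictMono y} = Set.univ :=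
      Set.eq_univ_of_forall Subsingleton.strictMono
    have heval := measurePreserving_funUnique (volume.restrict (Set.Ioi (0 : ℝ))) (Fin 1)
    rw [increasingVolume, huniv, Measure.restrict_univ]
    simp only [pow_zero, Nat.factorial_zero, Nat.cast_one, div_one, ENNReal.ofReal_one]
    rw [withDensity_const, one_smul]
    exact heval
  | succ n ih =>
    refine ⟨hlast _, Measure.ext fun A hA ↦ ?_⟩
    have hsnoc := measurePreserving_snoc
      fun _ : Fin (n + 2) ↦ (volume.restrict (Set.Ioi (0 : ℝ)))
    have hcone : MeasurableSet ((fun y : Fin (n + 2) → ℝ ↦ y (Fin.last _)) ⁻¹' A ∩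
        {y | StrictMono y}) := (hlast _ hA).inter measurableSet_strictMono
    rw [Measure.map_apply (hlast _) hA, increasingVolume, Measure.restrict_apply (hlast _ hA),
      ← hsnoc.measure_preimage hcone.nullMeasurableSet,
      Measure.prod_apply_symm (hsnoc.measurable hcone), withDensity_apply _ hA,
      ← lintegral_indicator hA]
    refine lintegral_congr_ae ?_
    filter_upwards [ae_restrict_mem measurableSet_Ioi] with t ht
    have hslice := ih.measure_preimage (s := Set.Iio t) measurableSet_Iio.nullMeasurableSet
    rw [withDensity_apply _ measurableSet_Iio, lintegral_Iio_pow_div_factorial n ht,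
      increasingVolume, Measure.restrict_apply (hlast n measurableSet_Iio)] at hslice
    by_cases htA : t ∈ A
    · rw [Set.indicator_of_mem htA, ← hslice]
      congr 1 with y
      simp [strictMono_snoc_iff, htA, and_comm]
    · rw [Set.indicator_of_notMem htA]
      refine measure_mono_null (t := ∅) (fun y hy ↦ htA ?_) measure_empty
      simpa using hy.1

theorem measurePreserving_last_poissonArrivalMeasure (n : ℕ) :
    MeasurePreserving (fun y ↦ y (Fin.last n)) (poissonArrivalMeasure n)
      (gammaMeasure (n + 1) 1) := by
  have hexp := measurePreserving_withDensity_comp (measurePreserving_last_increasingVolume n)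
    (g := fun t ↦ ENNReal.ofReal (exp (-t))) (by fun_prop)
  rw [← withDensity_mul _ (by fun_prop) (by fun_prop)] at hexp
  convert! hexp using 1
  rw [gammaMeasure_eq_withDensity_restrict_Ioi]
  refine withDensity_congr_ae ?_
  filter_upwards [ae_restrict_mem measurableSet_Ioi] with t (ht : 0 < t)
  rw [Pi.mul_apply, ← ENNReal.ofReal_mul (by positivity), Gamma_nat_eq_factorial]
  simp [inv_mul_eq_div]

theorem lintegral_increasingVolume_succ {n : ℕ} {F : (Fin (n + 2) → ℝ) → ℝ≥0∞}
    (hF : Measurable F) :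
    ∫⁻ y, F y ∂increasingVolume (n + 1) =
      ∫⁻ y, ∫⁻ t in Set.Ioi (y (Fin.last n)), F (Fin.snoc y t) ∂volume.restrict (Set.Ioi 0)
        ∂increasingVolume n := by
  have hsnoc := measurePreserving_snoc
    fun _ : Fin (n + 2) ↦ (volume.restrict (Set.Ioi (0 : ℝ)))
  have hcone : Measurable ({y : Fin (n + 2) → ℝ | StrictMono y}.indicator F) :=
    hF.indicator measurableSet_strictMono
  rw [increasingVolume, increasingVolume, ← lintegral_indicator measurableSet_strictMono,
    ← lintegral_indicator measurableSet_strictMono, ← hsnoc.lintegral_comp hcone]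
  refine (lintegral_prod _ (hcone.comp hsnoc.measurable).aemeasurable).trans
    (lintegral_congr fun y ↦ ?_)
  by_cases hy : StrictMono y
  · rw [Set.indicator_of_mem hy,
      ← lintegral_indicator (s := Set.Ioi (y (Fin.last n))) measurableSet_Ioi]
    simp only [Function.comp_apply, Set.indicator, Set.mem_ofPred_eq, strictMono_snoc_iff, hy,
      true_and, Set.mem_Ioi]
  · rw [Set.indicator_of_notMem hy]
    simp only [Function.comp_apply, Set.indicator, Set.mem_ofPred_eq, strictMono_snoc_iff, hy,
      false_and, if_false, lintegral_zero]

theorem ae_pos_increasingVolume {n : ℕ} (i : Fin (n + 1)) :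
    ∀ᵐ y ∂increasingVolume n, 0 < y i :=
  ae_restrict_of_ae <|
    Measure.tendsto_eval_ae_ae.eventually (ae_restrict_mem measurableSet_Ioi)

theorem measurePreserving_init_poissonArrivalMeasure (n : ℕ) :
    MeasurePreserving (fun (y : Fin (n + 2) → ℝ) i ↦ y (Fin.castSucc i))
      (poissonArrivalMeasure (n + 1)) (poissonArrivalMeasure n) := by
  have hinit : Measurable fun (y : Fin (n + 2) → ℝ) (i : Fin (n + 1)) ↦ y i.castSucc := by fun_prop
  refine ⟨hinit, Measure.ext_of_lintegral _ fun F hF ↦ ?_⟩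
  have hFinit : Measurable fun y : Fin (n + 2) → ℝ ↦ F fun i ↦ y i.castSucc := hF.comp hinit
  rw [lintegral_map hF hinit, poissonArrivalMeasure, poissonArrivalMeasure,
    lintegral_withDensity_eq_lintegral_mul _ (by fun_prop) hFinit,
    lintegral_withDensity_eq_lintegral_mul _ (by fun_prop) hF,
    lintegral_increasingVolume_succ (by fun_prop)]
  refine lintegral_congr_ae ?_
  filter_upwards [ae_pos_increasingVolume (Fin.last n)] with y hy
  simp only [Pi.mul_apply, Fin.snoc_castSucc, Fin.snoc_last]
  rw [lintegral_mul_const _ (by fun_prop), lintegral_Ioi_exp_neg hy.le]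

theorem measurePreserving_eval_poissonArrivalMeasure {n : ℕ} (i : Fin (n + 1)) :
    MeasurePreserving (fun y ↦ y i) (poissonArrivalMeasure n) (gammaMeasure (i + 1) 1) := by
  induction n with
  | zero =>
    simpa [Fin.fin_one_eq_zero i] using measurePreserving_last_poissonArrivalMeasure 0
  | succ n ih =>
    cases i using Fin.lastCases with
    | last => simpa using measurePreserving_last_poissonArrivalMeasure (n + 1)
    | cast i => exact (ih i).comp (measurePreserving_init_poissonArrivalMeasure n)

end PoissonArrivals

section GEV

variable {μ σ ξ : ℝ}

/-- The support of the one-dimensional GEV distribution. -/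
def gevSupport (μ σ ξ : ℝ) : Set ℝ := {x | 0 < 1 + ξ * ((x - μ) / σ)}

/-- The function `T = -log G` on the support, where `G` is the one-dimensional GEV distribution
function. -/
noncomputable def gevTail (μ σ ξ x : ℝ) : ℝ := (1 + ξ * ((x - μ) / σ)) ^ (-1 / ξ)

/-- The intensity of the limiting point process of extremes, whose density on the support is
minus the derivative of `gevTail`. -/
noncomputable def gevIntensity (μ σ ξ : ℝ) : Measure ℝ :=
  (volume.restrict (gevSupport μ σ ξ)).withDensity fun x ↦
    ENNReal.ofReal (σ⁻¹ * (1 + ξ * ((x - μ) / σ)) ^ (-1 / ξ - 1))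

instance : SigmaFinite (gevIntensity μ σ ξ) := by
  unfold gevIntensity
  infer_instance

theorem measurableSet_gevSupport : MeasurableSet (gevSupport μ σ ξ) :=
  measurableSet_lt (by fun_prop) (by fun_prop)

@[fun_prop]
theorem measurable_gevTail : Measurable (gevTail μ σ ξ) := by
  unfold gevTail
  fun_prop

theorem log_gevTail {x : ℝ} (hx : x ∈ gevSupport μ σ ξ) :
    log (gevTail μ σ ξ x) = -1 / ξ * log (1 + ξ * ((x - μ) / σ)) :=
  log_rpow hx _

theorem strictAntiOn_gevTail (hσ : 0 < σ) (hξ : ξ ≠ 0) :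
    StrictAntiOn (gevTail μ σ ξ) (gevSupport μ σ ξ) := by
  intro x hx y hy hxy
  have hz : (x - μ) / σ < (y - μ) / σ := by gcongr
  rcases hξ.lt_or_gt with hneg | hpos
  · exact rpow_lt_rpow (le_of_lt hy) (by nlinarith) (div_pos_of_neg_of_neg (by norm_num) hneg)
  · exact rpow_lt_rpow_of_neg hx (by nlinarith) (div_neg_of_neg_of_pos (by norm_num) hpos)

theorem image_gevTail (hσ : σ ≠ 0) (hξ : ξ ≠ 0) :
    gevTail μ σ ξ '' gevSupport μ σ ξ = Set.Ioi 0 := by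
  refine Set.Subset.antisymm (Set.image_subset_iff.2 fun x hx ↦ rpow_pos_of_pos hx _)
    fun y (hy : 0 < y) ↦ ?_
  have hz : 1 + ξ * ((μ + σ * ((y ^ (-ξ) - 1) / ξ) - μ) / σ) = y ^ (-ξ) := by
    field_simp
    ring
  refine ⟨μ + σ * ((y ^ (-ξ) - 1) / ξ), (rpow_pos_of_pos hy _).trans_eq hz.symm, ?_⟩
  rw [gevTail, hz, ← rpow_mul hy.le, show -ξ * (-1 / ξ) = 1 by field_simp, rpow_one]

theorem hasDerivAt_gevTail (hξ : ξ ≠ 0) {x : ℝ} (hx : x ∈ gevSupport μ σ ξ) :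
    HasDerivAt (gevTail μ σ ξ) (-(σ⁻¹ * (1 + ξ * ((x - μ) / σ)) ^ (-1 / ξ - 1))) x := by
  have hz : HasDerivAt (fun x : ℝ ↦ 1 + ξ * ((x - μ) / σ)) (ξ * (1 / σ)) x :=
    ((((hasDerivAt_id x).sub_const μ).div_const σ).const_mul ξ).const_add 1
  convert! hz.rpow_const (p := -1 / ξ) (Or.inl (ne_of_gt hx)) using 1
  field_simp

theorem measurePreserving_gevTail (hσ : 0 < σ) (hξ : ξ ≠ 0) :
    MeasurePreserving (gevTail μ σ ξ) (gevIntensity μ σ ξ) (volume.restrict (Set.Ioi 0)) := by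
  have hT := measurePreserving_withDensity_abs_deriv measurableSet_gevSupport measurable_gevTail
    (fun x hx ↦ (hasDerivAt_gevTail hξ hx).hasDerivWithinAt)
    (strictAntiOn_gevTail (μ := μ) hσ hξ).injOn
  rw [image_gevTail hσ.ne' hξ] at hT
  convert! hT using 1
  refine withDensity_congr_ae ?_
  filter_upwards [ae_restrict_mem measurableSet_gevSupport] with x hx
  have hpow : 0 ≤ (1 + ξ * ((x - μ) / σ)) ^ (-1 / ξ - 1) := rpow_nonneg (le_of_lt hx) _
  rw [abs_neg, abs_of_nonneg (by positivity)]

theorem gevrDensity_eq_prod_mul_exp {n : ℕ} {x : Fin (n + 1) → ℝ} (hx : StrictAnti x)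
    (hsupp : ∀ i, x i ∈ gevSupport μ σ ξ) :
    gevrDensity μ σ ξ (n + 1) x =
      (∏ i, σ⁻¹ * (1 + ξ * ((x i - μ) / σ)) ^ (-1 / ξ - 1)) *
        exp (-gevTail μ σ ξ (x (Fin.last n))) := by
  have hpow (i) : (1 + ξ * ((x i - μ) / σ)) ^ (-1 / ξ - 1) =
      exp (-(1 / ξ + 1) * log (1 + ξ * ((x i - μ) / σ))) := by
    rw [rpow_def_of_pos (hsupp i)]
    congr 1
    ring
  simp only [hpow, Finset.prod_mul_distrib, ← exp_sum, ← Finset.mul_sum, Finset.prod_const,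
    Finset.card_univ, Fintype.card_fin, inv_pow]
  rw [gevrDensity, dif_pos ⟨n.succ_pos, hx, hsupp⟩, mul_assoc, ← exp_add, gevTail, neg_mul,
    neg_add_eq_sub]
  rfl

theorem gevrMeasure_eq_withDensity (hσ : 0 < σ) (n : ℕ) :
    gevrMeasure μ σ ξ (n + 1) =
      ((Measure.pi fun _ ↦ gevIntensity μ σ ξ).restrict {x | StrictAnti x}).withDensity
        fun x ↦ ENNReal.ofReal (exp (-gevTail μ σ ξ (x (Fin.last n)))) := by
  have hregion : MeasurableSet
      ({x : Fin (n + 1) → ℝ | StrictAnti x} ∩ Set.univ.pi fun _ ↦ gevSupport μ σ ξ) :=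
    measurableSet_strictAnti.inter (.univ_pi fun _ ↦ measurableSet_gevSupport)
  unfold gevIntensity
  rw [pi_withDensity _ _ (by fun_prop),
    ← Measure.restrict_pi_pi (fun _ ↦ volume) fun _ ↦ gevSupport μ σ ξ, ← volume_pi,
    restrict_withDensity measurableSet_strictAnti,
    Measure.restrict_restrict measurableSet_strictAnti, ← withDensity_mul _ (by fun_prop)
    (by fun_prop), ← withDensity_indicator hregion, gevrMeasure]
  refine congrArg _ (funext fun x ↦ ?_)
  by_cases hx : x ∈ {x : Fin (n + 1) → ℝ | StrictAnti x} ∩ Set.univ.pi fun _ ↦ gevSupport μ σ ξ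
  · have hsupp (i) : x i ∈ gevSupport μ σ ξ := hx.2 i trivial
    have hdensity (i) : 0 ≤ σ⁻¹ * (1 + ξ * ((x i - μ) / σ)) ^ (-1 / ξ - 1) :=
      mul_nonneg (inv_nonneg.2 hσ.le) (rpow_nonneg (le_of_lt (hsupp i)) _)
    rw [Set.indicator_of_mem hx, gevrDensity_eq_prod_mul_exp hx.1 hsupp,
      Pi.mul_apply, ← ENNReal.ofReal_prod_of_nonneg fun i _ ↦ hdensity i,
      ENNReal.ofReal_mul (Finset.prod_nonneg fun i _ ↦ hdensity i)]
  · rw [Set.indicator_of_notMem hx, gevrDensity,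
      dif_neg fun h ↦ hx ⟨h.2.1, fun i _ ↦ h.2.2 i⟩, ENNReal.ofReal_zero]

theorem ae_mem_gevSupport_pi_gevIntensity {ι : Type*} [Fintype ι] :
    ∀ᵐ x ∂Measure.pi fun _ : ι ↦ gevIntensity μ σ ξ, ∀ i, x i ∈ gevSupport μ σ ξ :=
  ae_all_iff.2 fun _ ↦ Measure.tendsto_eval_ae_ae.eventually <|
    (withDensity_absolutelyContinuous _ _).ae_le (ae_restrict_mem measurableSet_gevSupport)

theorem ae_mem_gevSupport_gevrMeasure (hσ : 0 < σ) {n : ℕ} (i : Fin (n + 1)) :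
    ∀ᵐ x ∂gevrMeasure μ σ ξ (n + 1), x i ∈ gevSupport μ σ ξ := by
  rw [gevrMeasure_eq_withDensity hσ]
  filter_upwards [((withDensity_absolutelyContinuous _ _).trans
    Measure.restrict_le_self.absolutelyContinuous).ae_le ae_mem_gevSupport_pi_gevIntensity]
    with x hx using hx i

theorem measurePreserving_gevTail_increasingVolume (hσ : 0 < σ) (hξ : ξ ≠ 0) (n : ℕ) :
    MeasurePreserving (fun (x : Fin (n + 1) → ℝ) i ↦ gevTail μ σ ξ (x i))
      ((Measure.pi fun _ ↦ gevIntensity μ σ ξ).restrict {x | StrictAnti x})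
      (increasingVolume n) := by
  have hpi := measurePreserving_pi (fun _ : Fin (n + 1) ↦ gevIntensity μ σ ξ) _
    fun _ ↦ measurePreserving_gevTail hσ hξ
  have horder : (fun (x : Fin (n + 1) → ℝ) i ↦ gevTail μ σ ξ (x i)) ⁻¹' {y | StrictMono y}
      =ᵐ[Measure.pi fun _ ↦ gevIntensity μ σ ξ] {x | StrictAnti x} := by
    filter_upwards [ae_mem_gevSupport_pi_gevIntensity] with x hx
    have hlt (i j) : gevTail μ σ ξ (x i) < gevTail μ σ ξ (x j) ↔ x j < x i :=
      (strictAntiOn_gevTail hσ hξ).lt_iff_gt (hx i) (hx j)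
    exact propext (forall₃_congr fun i j _ ↦ hlt i j)
  rw [← Measure.restrict_congr_set horder]
  exact hpi.restrict_preimage measurableSet_strictMono

theorem measurePreserving_gevTail_gevrMeasure (hσ : 0 < σ) (hξ : ξ ≠ 0) (n : ℕ) :
    MeasurePreserving (fun (x : Fin (n + 1) → ℝ) i ↦ gevTail μ σ ξ (x i))
      (gevrMeasure μ σ ξ (n + 1)) (poissonArrivalMeasure n) := by
  have hdens : Measurable fun y : Fin (n + 1) → ℝ ↦ ENNReal.ofReal (exp (-y (Fin.last n))) := by
    fun_prop
  have harrival := measurePreserving_withDensity_comp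
    (measurePreserving_gevTail_increasingVolume (μ := μ) hσ hξ n) hdens
  rwa [← gevrMeasure_eq_withDensity hσ] at harrival

end GEV

/-- under the GEV_r distribution, `E[log(1+ξZ_j)] = −ξψ(j)` for
every `1 ≤ j ≤ r`. -/
theorem gevr_moment_log_transform
    (μ σ ξ : ℝ) (hσ : 0 < σ) (hξ : ξ ≠ 0) (r : ℕ) (hr : 1 ≤ r)
    (j : ℕ) (hj1 : 1 ≤ j) (hjr : j ≤ r) :
    ∫ x : Fin r → ℝ,
        Real.log (1 + ξ * ((x ⟨j - 1, by omega⟩ - μ) / σ))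
        ∂(gevrMeasure μ σ ξ r)
      = -ξ * digamma j := by
  obtain ⟨n, rfl⟩ : ∃ n, r = n + 1 := ⟨r - 1, by omega⟩
  obtain ⟨k, rfl⟩ : ∃ k, j = k + 1 := ⟨j - 1, by omega⟩
  let i : Fin (n + 1) := ⟨k, by omega⟩
  have harrival : MeasurePreserving (fun x : Fin (n + 1) → ℝ ↦ gevTail μ σ ξ (x i))
      (gevrMeasure μ σ ξ (n + 1)) (gammaMeasure (k + 1) 1) :=
    (measurePreserving_eval_poissonArrivalMeasure i).comp
      (measurePreserving_gevTail_gevrMeasure hσ hξ n)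
  calc ∫ x, log (1 + ξ * ((x i - μ) / σ)) ∂gevrMeasure μ σ ξ (n + 1)
    _ = ∫ x, -ξ * log (gevTail μ σ ξ (x i)) ∂gevrMeasure μ σ ξ (n + 1) := by
      refine integral_congr_ae ?_
      filter_upwards [ae_mem_gevSupport_gevrMeasure hσ i] with x hx
      rw [log_gevTail hx]
      field_simp
    _ = ∫ t, -ξ * log t ∂gammaMeasure (k + 1) 1 := by
      rw [← harrival.map_eq, integral_map harrival.aemeasurable (by fun_prop)]
    _ = -ξ * digamma (k + 1 : ℕ) := by
      rw [integral_const_mul, integral_log_gammaMeasure_one (by positivity), Nat.cast_succ]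
end

section
/- For every μ ∈ ℝ, σ > 0, ξ ≠ 0, and integer r ≥ 1, the GEV_r density f_r is a probability density: f_r ≥ 0 and its Lebesgue integral over ℝ^r (equivalently, over the region D_r) equals 1. -/
open MeasureTheory ProbabilityTheory Real Filter Topology

/-!
The function `w x = (1 + ξ (x - μ) / σ) ^ (-1 / ξ)` decreases from the support onto `(0, ∞)`, and
the density is `∏ |w'(x_j)| · exp (-w(x_r))`. Since the Jacobian of `x ↦ (w(x_1), …, w(x_r))` is
diagonal, the substitution `t_j = w(x_j)` turns the integral into that of `exp (-t_r)` over
`0 < t_1 < ⋯ < t_r`, the joint density of the first `r` arrival times of a unit Poisson process.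
The spacings `t_j - t_{j-1}` are a unimodular linear function of `t` whose sum is `t_r`, so in
these coordinates the integrand is a product of `r` standard exponential densities.
-/

open Set

section Spacings

/-- The spacings `(t₀, t₁ - t₀, …, tₙ - tₙ₋₁)` of a tuple `t`, as a linear map. On the arrival
times of a Poisson process these are the interarrival times, the first one measured from `0`. -/
def spacings (R : Type*) [CommRing R] (n : ℕ) : (Fin (n + 1) → R) →ₗ[R] (Fin (n + 1) → R) where
  toFun t := Fin.cons (t 0) fun i => t i.succ - t i.castSucc
  map_add' s t := by
    ext i
    cases i using Fin.cases with
    | zero => rfl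
    | succ i => exact add_sub_add_comm _ _ _ _
  map_smul' c t := by
    ext i
    cases i using Fin.cases with
    | zero => rfl
    | succ i => exact (mul_sub _ _ _).symm

variable {n : ℕ} {R : Type*} [CommRing R]

theorem spacings_apply_zero (t : Fin (n + 1) → R) : spacings R n t 0 = t 0 := rfl

theorem spacings_apply_succ (t : Fin (n + 1) → R) (i : Fin n) :
    spacings R n t i.succ = t i.succ - t i.castSucc := rfl

theorem sum_spacings (t : Fin (n + 1) → R) : ∑ i, spacings R n t i = t (Fin.last n) := by
  rw [Fin.sum_univ_succ]
  simp only [spacings_apply_zero, spacings_apply_succ, Finset.sum_sub_distrib]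
  linear_combination (Fin.sum_univ_succ t).symm.trans (Fin.sum_univ_castSucc t)

theorem det_spacings : LinearMap.det (spacings R n) = 1 := by
  have htri : (LinearMap.toMatrix' (spacings R n)).IsLowerTriangular := by
    intro i j hij
    replace hij : i < j := hij
    cases i using Fin.cases with
    | zero => simp [LinearMap.toMatrix'_apply, spacings_apply_zero, hij.ne]
    | succ i =>
      simp [LinearMap.toMatrix'_apply, spacings_apply_succ, hij.ne,
        (i.castSucc_lt_succ.trans hij).ne]
  have hdiag (i : Fin (n + 1)) : LinearMap.toMatrix' (spacings R n) i i = 1 := by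
    cases i using Fin.cases with
    | zero => simp [LinearMap.toMatrix'_apply, spacings_apply_zero]
    | succ i => simp [LinearMap.toMatrix'_apply, spacings_apply_succ, i.castSucc_lt_succ.ne]
  rw [← LinearMap.det_toMatrix', Matrix.det_of_isLowerTriangular _ htri,
    Finset.prod_eq_one fun i _ => hdiag i]

theorem forall_spacings_pos_iff [LinearOrder R] [IsOrderedAddMonoid R] {t : Fin (n + 1) → R} :
    (∀ i, 0 < spacings R n t i) ↔ StrictMono t ∧ ∀ i, 0 < t i := by
  have hsplit : (∀ i, 0 < spacings R n t i) ↔ 0 < t 0 ∧ StrictMono t := by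
    simp only [Fin.forall_fin_succ, spacings_apply_zero, spacings_apply_succ, sub_pos,
      Fin.strictMono_iff_lt_succ]
  rw [hsplit]
  exact ⟨fun h => ⟨h.2, fun i => h.1.trans_le (h.2.monotone i.zero_le)⟩, fun h => ⟨h.2 0, h.1⟩⟩

end Spacings

theorem measurePreserving_of_det_eq_one {ι : Type*} [Fintype ι] {f : (ι → ℝ) →ₗ[ℝ] (ι → ℝ)}
    (hf : LinearMap.det f = 1) : MeasurePreserving f where
  measurable := f.continuous_of_finiteDimensional.measurable
  map_eq := by
    rw [Real.map_linearMap_volume_pi_eq_smul_volume_pi (by simp [hf])]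
    simp [hf]

theorem setIntegral_pi_Ioi_exp_neg_sum (ι : Type*) [Fintype ι] :
    ∫ s in univ.pi fun _ : ι => Ioi (0 : ℝ), exp (-∑ i, s i) = 1 := by
  simp only [← Finset.sum_neg_distrib, exp_sum]
  rw [volume_pi, Measure.restrict_pi_pi,
    integral_fintype_prod_eq_pow (ι := ι) (fun t : ℝ => exp (-t)), integral_exp_neg_Ioi_zero,
    one_pow]

theorem setIntegral_strictMono_pos_exp_neg_last (n : ℕ) :
    ∫ t in {t : Fin (n + 1) → ℝ | StrictMono t ∧ ∀ i, 0 < t i}, exp (-t (Fin.last n)) = 1 := by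
  have hpre : {t : Fin (n + 1) → ℝ | StrictMono t ∧ ∀ i, 0 < t i} =
      spacings ℝ n ⁻¹' univ.pi fun _ => Ioi 0 := by
    ext t
    simp [← forall_spacings_pos_iff]
  have hmp : MeasurePreserving (spacings ℝ n) := measurePreserving_of_det_eq_one det_spacings
  calc ∫ t in {t : Fin (n + 1) → ℝ | StrictMono t ∧ ∀ i, 0 < t i}, exp (-t (Fin.last n))
      = ∫ t in spacings ℝ n ⁻¹' univ.pi fun _ => Ioi 0, exp (-∑ i, spacings ℝ n t i) := by
        simp only [hpre, sum_spacings]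
    _ = ∫ s in univ.pi fun _ : Fin (n + 1) => Ioi (0 : ℝ), exp (-∑ i, s i) := by
        have hexp : Continuous fun s : Fin (n + 1) → ℝ => exp (-∑ i, s i) := by fun_prop
        conv_rhs => rw [← hmp.map_eq]
        exact (setIntegral_map (MeasurableSet.univ_pi fun _ => measurableSet_Ioi)
          hexp.aestronglyMeasurable hmp.aemeasurable).symm
    _ = 1 := setIntegral_pi_Ioi_exp_neg_sum _

theorem setIntegral_image_piMap {ι E : Type*} [Fintype ι] [NormedAddCommGroup E]
    [NormedSpace ℝ E] {f f' : ι → ℝ → ℝ} {s : Set (ι → ℝ)} {t : ι → Set ℝ} (hs : MeasurableSet s)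
    (hst : s ⊆ univ.pi t) (hf' : ∀ i, ∀ x ∈ t i, HasDerivWithinAt (f i) (f' i x) (t i) x)
    (hf : ∀ i, InjOn (f i) (t i)) (g : (ι → ℝ) → E) :
    ∫ y in Pi.map f '' s, g y = ∫ x in s, (∏ i, |f' i (x i)|) • g (Pi.map f x) := by
  let J (x : ι → ℝ) : (ι → ℝ) →L[ℝ] (ι → ℝ) := ContinuousLinearMap.pi fun i =>
    (ContinuousLinearMap.toSpanSingleton ℝ (f' i (x i))).comp (ContinuousLinearMap.proj i)
  have hJ : ∀ x ∈ s, HasFDerivWithinAt (Pi.map f) (J x) s x := fun x hx =>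
    hasFDerivWithinAt_pi.2 fun i =>
      (hf' i (x i) (hst hx i trivial)).hasFDerivWithinAt.comp x (hasFDerivWithinAt_apply i x s)
        fun y hy => hst hy i trivial
  have hinj : InjOn (Pi.map f) s := fun x hx y hy hxy =>
    funext fun i => hf i (hst hx i trivial) (hst hy i trivial) (congrFun hxy i)
  have hdet (x : ι → ℝ) : |(J x).det| = ∏ i, |f' i (x i)| := by
    simp [J, ContinuousLinearMap.det_pi, Finset.abs_prod]
  simp only [integral_image_eq_integral_abs_det_fderiv_smul volume hs hJ hinj, hdet]

theorem image_piMap_strictAnti {ι α β : Type*} [Preorder ι] [LinearOrder α] [Preorder β]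
    {w : α → β} {S : Set α} (hw : StrictAntiOn w S) :
    Pi.map (fun _ => w) '' {x : ι → α | StrictAnti x ∧ ∀ i, x i ∈ S} =
      {t | StrictMono t ∧ ∀ i, t i ∈ w '' S} := by
  ext t
  constructor
  · rintro ⟨x, ⟨hanti, hmem⟩, rfl⟩
    exact ⟨fun i j hij => hw (hmem j) (hmem i) (hanti hij), fun i => mem_image_of_mem w (hmem i)⟩
  · rintro ⟨hmono, hmem⟩
    choose x hxS hxt using hmem
    obtain rfl : (fun i => w (x i)) = t := funext hxt
    exact ⟨x, ⟨fun i j hij => (hw.lt_iff_gt (hxS i) (hxS j)).1 (hmono hij), hxS⟩, rfl⟩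

theorem measurableSet_strictAnti_mem {ι α : Type*} [Countable ι] [Preorder ι] [LinearOrder α]
    [TopologicalSpace α] [OrderClosedTopology α] [SecondCountableTopology α] [MeasurableSpace α]
    [OpensMeasurableSpace α] {S : Set α} (hS : MeasurableSet S) :
    MeasurableSet {x : ι → α | StrictAnti x ∧ ∀ i, x i ∈ S} := by
  simp only [StrictAnti, ofPred_and, ofPred_forall]
  exact (MeasurableSet.iInter fun i => .iInter fun j => .iInter fun _ =>
    measurableSet_lt (measurable_pi_apply j) (measurable_pi_apply i)).inter
    (.iInter fun i => measurable_pi_apply i hS)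

theorem setIntegral_strictAnti_prod_abs_deriv_mul_exp_neg {S : Set ℝ} (hS : MeasurableSet S)
    {w w' : ℝ → ℝ} (hw' : ∀ x ∈ S, HasDerivWithinAt w (w' x) S x) (hw : StrictAntiOn w S)
    (himage : w '' S = Ioi 0) (n : ℕ) :
    ∫ x in {x : Fin (n + 1) → ℝ | StrictAnti x ∧ ∀ i, x i ∈ S},
      (∏ i, |w' (x i)|) * exp (-w (x (Fin.last n))) = 1 := by
  rw [← setIntegral_strictMono_pos_exp_neg_last n]
  simp only [← mem_Ioi (b := (0 : ℝ)), ← himage]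
  rw [← image_piMap_strictAnti hw, setIntegral_image_piMap (measurableSet_strictAnti_mem hS)
    (fun x hx i _ => hx.2 i) (fun _ => hw') (fun _ => hw.injOn)]
  simp only [Pi.map_apply, smul_eq_mul]

section GEV

variable {μ σ ξ : ℝ}

/-- The affine function `1 + ξ z`, `z = (x - μ) / σ`, of which the GEV density takes powers. -/
noncomputable def gevrBase (μ σ ξ x : ℝ) : ℝ := 1 + ξ * ((x - μ) / σ)

/-- The support of the marginals of the GEV density. -/
def gevrSupport (μ σ ξ : ℝ) : Set ℝ := {x | 0 < gevrBase μ σ ξ x}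

/-- `(1 + ξ z) ^ (-1 / ξ)`: the expected number of points above `x` in the limiting Poisson
process of extremes, of which the GEV_r law describes the `r` largest points. -/
noncomputable def gevrTail (μ σ ξ x : ℝ) : ℝ := gevrBase μ σ ξ x ^ (-1 / ξ)

/-- The intensity `-(gevrTail μ σ ξ)'` of the limiting Poisson process of extremes. -/
noncomputable def gevrIntensity (μ σ ξ x : ℝ) : ℝ := σ⁻¹ * gevrBase μ σ ξ x ^ (-1 / ξ - 1)

theorem measurableSet_gevrSupport : MeasurableSet (gevrSupport μ σ ξ) :=
  measurableSet_lt measurable_const (by unfold gevrBase; fun_prop)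

theorem gevrIntensity_nonneg (hσ : 0 ≤ σ) {x : ℝ} (hx : x ∈ gevrSupport μ σ ξ) :
    0 ≤ gevrIntensity μ σ ξ x :=
  mul_nonneg (inv_nonneg.2 hσ) (rpow_nonneg (le_of_lt hx) _)

theorem hasDerivAt_gevrTail (hξ : ξ ≠ 0) {x : ℝ} (hx : x ∈ gevrSupport μ σ ξ) :
    HasDerivAt (gevrTail μ σ ξ) (-gevrIntensity μ σ ξ x) x := by
  have hbase : HasDerivAt (gevrBase μ σ ξ) (ξ * (1 / σ)) x :=
    ((((hasDerivAt_id x).sub_const μ).div_const σ).const_mul ξ).const_add 1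
  have hslope : -gevrIntensity μ σ ξ x =
      ξ * (1 / σ) * (-1 / ξ) * gevrBase μ σ ξ x ^ (-1 / ξ - 1) := by
    unfold gevrIntensity
    field_simp
  exact hslope ▸ hbase.rpow_const (Or.inl (ne_of_gt hx))

theorem strictAntiOn_gevrTail (hσ : 0 < σ) (hξ : ξ ≠ 0) :
    StrictAntiOn (gevrTail μ σ ξ) (gevrSupport μ σ ξ) := by
  intro x hx y hy hxy
  have hz : (x - μ) / σ < (y - μ) / σ := by gcongr
  rcases hξ.lt_or_gt with hneg | hpos
  · have hbase : gevrBase μ σ ξ y < gevrBase μ σ ξ x :=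
      (add_lt_add_iff_left 1).2 (mul_lt_mul_of_neg_left hz hneg)
    exact rpow_lt_rpow (le_of_lt hy) hbase (div_pos_of_neg_of_neg neg_one_lt_zero hneg)
  · have hbase : gevrBase μ σ ξ x < gevrBase μ σ ξ y :=
      (add_lt_add_iff_left 1).2 (mul_lt_mul_of_pos_left hz hpos)
    exact rpow_lt_rpow_of_neg hx hbase (div_neg_of_neg_of_pos neg_one_lt_zero hpos)

theorem image_gevrTail (hσ : σ ≠ 0) (hξ : ξ ≠ 0) :
    gevrTail μ σ ξ '' gevrSupport μ σ ξ = Ioi 0 := by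
  refine Subset.antisymm (image_subset_iff.2 fun x hx => rpow_pos_of_pos hx _) fun t ht => ?_
  have hbase : gevrBase μ σ ξ (μ + σ * ((t ^ (-ξ) - 1) / ξ)) = t ^ (-ξ) := by
    unfold gevrBase
    field_simp
    ring
  refine ⟨μ + σ * ((t ^ (-ξ) - 1) / ξ), ?_, ?_⟩
  · exact (rpow_pos_of_pos ht _).trans_eq hbase.symm
  · rw [gevrTail, hbase, ← rpow_mul (le_of_lt ht), show -ξ * (-1 / ξ) = 1 by field_simp, rpow_one]

theorem gevrDensity_nonneg (hσ : 0 ≤ σ) {r : ℕ} (x : Fin r → ℝ) : 0 ≤ gevrDensity μ σ ξ r x := by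
  unfold gevrDensity
  split_ifs <;> positivity

theorem gevrDensity_succ_of_mem {n : ℕ} {x : Fin (n + 1) → ℝ} (hx : StrictAnti x)
    (hmem : ∀ i, x i ∈ gevrSupport μ σ ξ) :
    gevrDensity μ σ ξ (n + 1) x =
      (∏ i, gevrIntensity μ σ ξ (x i)) * exp (-gevrTail μ σ ξ (x (Fin.last n))) := by
  have hprod : ∏ i, gevrIntensity μ σ ξ (x i) = (σ ^ (n + 1))⁻¹ *
      exp (-(1 / ξ + 1) * ∑ i, log (gevrBase μ σ ξ (x i))) := by
    have hpow (i) : gevrBase μ σ ξ (x i) ^ (-1 / ξ - 1) =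
        exp (-(1 / ξ + 1) * log (gevrBase μ σ ξ (x i))) := by
      rw [rpow_def_of_pos (hmem i)]
      ring_nf
    simp only [gevrIntensity, Finset.prod_mul_distrib, hpow, ← exp_sum, ← Finset.mul_sum,
      Finset.prod_const, Finset.card_univ, Fintype.card_fin, inv_pow]
  have hdensity : gevrDensity μ σ ξ (n + 1) x = (σ ^ (n + 1))⁻¹ *
      exp (-gevrTail μ σ ξ (x (Fin.last n)) -
        (1 / ξ + 1) * ∑ i, log (gevrBase μ σ ξ (x i))) :=
    dif_pos ⟨n.succ_pos, hx, hmem⟩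
  rw [hdensity, hprod, mul_assoc, ← exp_add, neg_mul, neg_add_eq_sub]

theorem gevrDensity_succ_eq_indicator (μ σ ξ : ℝ) (n : ℕ) :
    gevrDensity μ σ ξ (n + 1) =
      {x : Fin (n + 1) → ℝ | StrictAnti x ∧ ∀ i, x i ∈ gevrSupport μ σ ξ}.indicator fun x =>
        (∏ i, gevrIntensity μ σ ξ (x i)) * exp (-gevrTail μ σ ξ (x (Fin.last n))) := by
  ext x
  by_cases hx : x ∈ {x : Fin (n + 1) → ℝ | StrictAnti x ∧ ∀ i, x i ∈ gevrSupport μ σ ξ}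
  · rw [indicator_of_mem hx, gevrDensity_succ_of_mem hx.1 hx.2]
  · rw [indicator_of_notMem hx]
    exact dif_neg fun h => hx h.2

end GEV

/-- `f_r` is a probability density: it is nonnegative and its
Lebesgue integral over `ℝ^r` equals `1`. -/
theorem gevrDensity_isProbabilityDensity
    (μ σ ξ : ℝ) (hσ : 0 < σ) (hξ : ξ ≠ 0) (r : ℕ) (hr : 1 ≤ r) :
    (∀ x : Fin r → ℝ, 0 ≤ gevrDensity μ σ ξ r x) ∧
    ∫ x : Fin r → ℝ, gevrDensity μ σ ξ r x = 1 := by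
  refine ⟨gevrDensity_nonneg hσ.le, ?_⟩
  obtain ⟨n, rfl⟩ := Nat.exists_eq_add_of_le' hr
  have hD := measurableSet_strictAnti_mem (ι := Fin (n + 1))
    (measurableSet_gevrSupport (μ := μ) (σ := σ) (ξ := ξ))
  rw [gevrDensity_succ_eq_indicator, integral_indicator hD,
    ← setIntegral_strictAnti_prod_abs_deriv_mul_exp_neg measurableSet_gevrSupport
      (fun x hx => (hasDerivAt_gevrTail hξ hx).hasDerivWithinAt)
      (strictAntiOn_gevrTail hσ hξ) (image_gevrTail hσ.ne' hξ) n]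
  refine setIntegral_congr_fun hD fun x hx => ?_
  simp only [abs_neg, abs_of_nonneg (gevrIntensity_nonneg hσ.le (hx.2 _))]
end
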